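/- arXiv:2102.11072 — 2 statements merged into one kernel-verified Lean document; each statement's English description precedes it below -/
import Mathlib

section
/- Let n ≥ 1 be a natural number, let ε > 0, and for each i ∈ {1,…,n} let a_i < b_i be real bounds. Let σ_i = n(b_i − a_i)/ε. Then for all vectors X₁, X₂, R ∈ ℝⁿ, the product of Laplace densities satisfies ∏_{i=1}^n f_{σ_i}(R_i − X₁ᵢ) ≤ exp(ε · d(X₁, X₂)) · ∏_{i=1}^n f_{σ_i}(R_i − X₂ᵢ). (This is the pointwise-density form of the paper's Theorem 1: adding independent Laplace noise with scale σ_i = n(b_i − a_i)/ε to each coordinate yields ε-differential privacy with respect to the normalized distance d.) -/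
open Real Finset

/-- The density at `t` of the centred Laplace distribution of scale `σ`, the noise added to each
coordinate. It is meant for `0 < σ`; division by zero makes it vanish identically at `σ = 0`. -/
noncomputable def laplaceDensity (σ t : ℝ) : ℝ :=
  exp (-|t| / σ) / (2 * σ)

theorem laplaceDensity_nonneg {σ : ℝ} (hσ : 0 ≤ σ) (t : ℝ) : 0 ≤ laplaceDensity σ t := by
  unfold laplaceDensity
  positivity

theorem laplaceDensity_le_exp_mul {σ : ℝ} (hσ : 0 ≤ σ) (s t : ℝ) :
    laplaceDensity σ s ≤ exp (|s - t| / σ) * laplaceDensity σ t := by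
  have abs_le : -|s| ≤ |s - t| + -|t| := by
    linarith [abs_sub_abs_le_abs_sub t s, abs_sub_comm s t]
  calc exp (-|s| / σ) / (2 * σ)
      ≤ exp ((|s - t| + -|t|) / σ) / (2 * σ) := by gcongr
    _ = exp (|s - t| / σ) * (exp (-|t| / σ) / (2 * σ)) := by
      rw [add_div, exp_add, mul_div_assoc]

theorem prod_laplaceDensity_le_exp_sum_mul_prod {ι : Type*} (s : Finset ι) {σ : ι → ℝ}
    (hσ : ∀ i ∈ s, 0 ≤ σ i) (x y : ι → ℝ) :
    ∏ i ∈ s, laplaceDensity (σ i) (x i) ≤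
      exp (∑ i ∈ s, |x i - y i| / σ i) * ∏ i ∈ s, laplaceDensity (σ i) (y i) := by
  rw [exp_sum, ← prod_mul_distrib]
  exact prod_le_prod (fun i hi ↦ laplaceDensity_nonneg (hσ i hi) (x i))
    fun i hi ↦ laplaceDensity_le_exp_mul (hσ i hi) (x i) (y i)

theorem sum_div_mul_div_eq_mul_sum_div_div {ι K : Type*} [Field K] (s : Finset ι)
    (d w : ι → K) (c ε : K) :
    ∑ i ∈ s, d i / (c * w i / ε) = ε * ((∑ i ∈ s, d i / w i) / c) := by
  rw [sum_div, mul_sum]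
  exact sum_congr rfl fun i _ ↦ by rw [div_div_eq_mul_div]; ring

/-- pointwise-density form of the paper's Theorem 1.
For `n ≥ 1`, `ε > 0`, bounds `a i < b i` and Laplace scales
`σ i = n * (b i - a i) / ε`, for all vectors `X₁ X₂ R : Fin n → ℝ`,
the product of Laplace densities satisfies
`∏ i, f_{σ i} (R i - X₁ i) ≤ exp (ε * d X₁ X₂) * ∏ i, f_{σ i} (R i - X₂ i)`,
where `d X Y = (∑ i, |X i - Y i| / (b i - a i)) / n`. -/
theorem laplace_mechanism_pointwise_density_dp
    (n : ℕ) (hn : 1 ≤ n) (ε : ℝ) (hε : 0 < ε)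
    (a b : Fin n → ℝ) (hab : ∀ i, a i < b i)
    (σ : Fin n → ℝ) (hσ : ∀ i, σ i = n * (b i - a i) / ε)
    (X₁ X₂ R : Fin n → ℝ) :
    (∏ i, Real.exp (-|R i - X₁ i| / σ i) / (2 * σ i)) ≤
      Real.exp (ε * ((∑ i, |X₁ i - X₂ i| / (b i - a i)) / n)) *
        ∏ i, Real.exp (-|R i - X₂ i| / σ i) / (2 * σ i) := by
  have scale_nonneg (i : Fin n) : 0 ≤ σ i := by
    rw [hσ i]
    have := sub_pos.mpr (hab i)
    positivity
  have exponent_eq : ∑ i, |(R i - X₁ i) - (R i - X₂ i)| / σ i =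
      ε * ((∑ i, |X₁ i - X₂ i| / (b i - a i)) / n) := by
    simp only [sub_sub_sub_cancel_left, abs_sub_comm (X₂ _), hσ,
      sum_div_mul_div_eq_mul_sum_div_div]
  rw [← exponent_eq]
  exact prod_laplaceDensity_le_exp_sum_mul_prod univ (fun i _ ↦ scale_nonneg i)
    (fun i ↦ R i - X₁ i) (fun i ↦ R i - X₂ i)
end

section
/- Let n ≥ 1 be a natural number, let ε > 0, and for each i ∈ {1,…,n} let a_i < b_i be real bounds, and set σ_i = n(b_i − a_i)/ε. Then for all X₁, X₂ ∈ ℝⁿ and every Lebesgue-measurable set S ⊆ ℝⁿ, ∫_S ∏_{i=1}^n f_{σ_i}(R_i − X₁ᵢ) dR ≤ exp(ε · d(X₁, X₂)) · ∫_S ∏_{i=1}^n f_{σ_i}(R_i − X₂ᵢ) dR. (Measure-theoretic form of the paper's Theorem 1: the probability that the Laplace mechanism applied to X₁ outputs a value in S is at most exp(ε · d(X₁, X₂)) times the probability that it does so for X₂.) -/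
/-!
By the triangle inequality, moving the centre of a Laplace density of scale `σ` from `y` to `x`
multiplies it pointwise by at most `exp (|x - y| / σ)`. Over independent coordinates these factors
multiply, so their exponents add up to `∑ i, |x i - y i| / σ i`; the scales `n * (b i - a i) / ε`
are those for which this sum is `ε` times the normalized distance. The pointwise bound is then
integrated over the output event.
-/

open Real Finset MeasureTheory

/-- Real-valued density of the Laplace distribution with mean `m` and scale `σ`, the density of one
coordinate of the mechanism's output. Only scales `0 < σ` are meaningful: at `σ = 0` the divisions
by zero make it vanish identically. -/
noncomputable def laplacePDFReal (m σ t : ℝ) : ℝ :=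
  exp (-|t - m| / σ) / (2 * σ)

theorem laplacePDFReal_nonneg {σ : ℝ} (hσ : 0 < σ) (m t : ℝ) : 0 ≤ laplacePDFReal m σ t := by
  unfold laplacePDFReal
  positivity

theorem integrable_exp_neg_abs_div {σ : ℝ} (hσ : 0 < σ) :
    Integrable fun t : ℝ => exp (-|t| / σ) := by
  have hneg : -σ⁻¹ < 0 := neg_lt_zero.2 (inv_pos.2 hσ)
  have hradial := (integrable_fun_norm_addHaar (volume : Measure ℝ)
    (f := fun r : ℝ => exp (-σ⁻¹ * r))).2 (by simpa using integrableOn_exp_mul_Ioi hneg 0)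
  simpa only [norm_eq_abs, neg_mul, inv_mul_eq_div, neg_div] using hradial

theorem integrable_laplacePDFReal {σ : ℝ} (hσ : 0 < σ) (m : ℝ) :
    Integrable (laplacePDFReal m σ) :=
  ((integrable_exp_neg_abs_div hσ).comp_sub_right m).div_const (2 * σ)

theorem laplacePDFReal_le_exp_mul {σ : ℝ} (hσ : 0 < σ) (x y t : ℝ) :
    laplacePDFReal x σ t ≤ exp (|x - y| / σ) * laplacePDFReal y σ t := by
  have htriangle : -|t - x| ≤ |x - y| + -|t - y| := by linarith [abs_sub_le t x y]
  unfold laplacePDFReal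
  rw [← mul_div_assoc, ← exp_add, ← add_div]
  gcongr

section FiniteProduct

variable {ι : Type*} [Fintype ι] {σ : ι → ℝ}

theorem integrable_prod_laplacePDFReal (hσ : ∀ i, 0 < σ i) (m : ι → ℝ) :
    Integrable fun R : ι → ℝ => ∏ i, laplacePDFReal (m i) (σ i) (R i) :=
  Integrable.fintype_prod fun i => integrable_laplacePDFReal (hσ i) (m i)

theorem prod_laplacePDFReal_le_exp_mul (hσ : ∀ i, 0 < σ i) (x y R : ι → ℝ) :
    ∏ i, laplacePDFReal (x i) (σ i) (R i) ≤
      exp (∑ i, |x i - y i| / σ i) * ∏ i, laplacePDFReal (y i) (σ i) (R i) := by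
  rw [exp_sum, ← prod_mul_distrib]
  exact prod_le_prod (fun i _ => laplacePDFReal_nonneg (hσ i) (x i) (R i))
    fun i _ => laplacePDFReal_le_exp_mul (hσ i) (x i) (y i) (R i)

theorem laplace_mechanism_measure_dp_general (hσ : ∀ i, 0 < σ i) (x y : ι → ℝ)
    (s : Set (ι → ℝ)) :
    ∫ R in s, ∏ i, laplacePDFReal (x i) (σ i) (R i) ≤
      exp (∑ i, |x i - y i| / σ i) * ∫ R in s, ∏ i, laplacePDFReal (y i) (σ i) (R i) := by
  rw [← integral_const_mul]
  exact setIntegral_mono (integrable_prod_laplacePDFReal hσ x).integrableOn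
    ((integrable_prod_laplacePDFReal hσ y).integrableOn.const_mul _)
    (prod_laplacePDFReal_le_exp_mul hσ x y)

end FiniteProduct

theorem mul_sum_div_div_eq_sum_div_div {ι K : Type*} [Semifield K] (s : Finset ι) (d w : ι → K)
    (ε N : K) : ε * ((∑ i ∈ s, d i / w i) / N) = ∑ i ∈ s, d i / (N * w i / ε) := by
  rw [sum_div, mul_sum]
  refine sum_congr rfl fun i _ => ?_
  rw [div_div, mul_comm (w i), div_div_eq_mul_div, mul_div_assoc', mul_comm ε]

/-- measure-theoretic form of the paper's Theorem 1.
With Laplace scales `σ i = n * (b i - a i) / ε`, for all `X₁ X₂ : Fin n → ℝ`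
and every Lebesgue-measurable set `S ⊆ ℝⁿ`, the probability that the Laplace
mechanism applied to `X₁` outputs a value in `S` is at most
`exp (ε * d X₁ X₂)` times the probability that it does so for `X₂`. -/
theorem laplace_mechanism_measure_dp
    (n : ℕ) (hn : 1 ≤ n) (ε : ℝ) (hε : 0 < ε)
    (a b : Fin n → ℝ) (hab : ∀ i, a i < b i)
    (σ : Fin n → ℝ) (hσ : ∀ i, σ i = n * (b i - a i) / ε)
    (X₁ X₂ : Fin n → ℝ) (S : Set (Fin n → ℝ)) (hS : MeasurableSet S) :
    (∫ R in S, ∏ i, Real.exp (-|R i - X₁ i| / σ i) / (2 * σ i)) ≤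
      Real.exp (ε * ((∑ i, |X₁ i - X₂ i| / (b i - a i)) / n)) *
        ∫ R in S, ∏ i, Real.exp (-|R i - X₂ i| / σ i) / (2 * σ i) := by
  have hσ_pos (i : Fin n) : 0 < σ i :=
    hσ i ▸ div_pos (mul_pos (Nat.cast_pos.2 hn) (sub_pos.2 (hab i))) hε
  simp only [mul_sum_div_div_eq_sum_div_div, ← hσ]
  exact laplace_mechanism_measure_dp_general hσ_pos X₁ X₂ S
end
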